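/- arXiv:1312.2568 — 2 statements merged into one kernel-verified Lean document; each statement's English description precedes it below -/
import Mathlib

section
/- Let d ≥ 1, a_c = (d−2)/2, and let a, b, p satisfy b = a − a_c + d/p with p ∈ [2, 2d/(d−2)] if d ≥ 3, p ∈ [2,∞) if d = 1 or 2, and the restrictions a < a_c and a ≤ b ≤ a+1 if d ≥ 3, a < b ≤ a+1 if d = 2, a + 1/2 < b ≤ a+1 if d = 1. Then there exists a positive constant C such that ( ∫_{ℝ^d} |u|^p |x|^{−bp} dx )^{2/p} ≤ C ∫_{ℝ^d} |∇u|² |x|^{−2a} dx for every smooth function u with compact support in ℝ^d \ {0}. -/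
open MeasureTheory Real
open scoped RealInnerProductSpace

noncomputable section

/-- A smooth function with compact support contained in `ℝ^d \ {0}`. -/
def TestAwayFromZero (d : ℕ) (u : EuclideanSpace ℝ (Fin d) → ℝ) : Prop :=
  ContDiff ℝ (⊤ : ℕ∞) u ∧ HasCompactSupport u ∧ (0 : EuclideanSpace ℝ (Fin d)) ∉ tsupport u

/-- The admissibility conditions on the parameters `(a, b, p)` of the
Caffarelli-Kohn-Nirenberg inequality, with `a_c = (d−2)/2` and `b = a − a_c + d/p`. -/
def CKNAdmissible (d : ℕ) (a b p : ℝ) : Prop :=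
  b = a - ((d : ℝ) - 2) / 2 + (d : ℝ) / p ∧
  2 ≤ p ∧ (3 ≤ d → p ≤ 2 * (d : ℝ) / ((d : ℝ) - 2)) ∧
  a < ((d : ℝ) - 2) / 2 ∧
  (3 ≤ d → a ≤ b ∧ b ≤ a + 1) ∧
  (d = 2 → a < b ∧ b ≤ a + 1) ∧
  (d = 1 → a + 1 / 2 < b ∧ b ≤ a + 1)

/-- The Laplacian `Δu = ∑ ∂²u/∂x_i²`. -/
def lap (d : ℕ) (u : EuclideanSpace ℝ (Fin d) → ℝ) (x : EuclideanSpace ℝ (Fin d)) : ℝ :=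
  ∑ i : Fin d, iteratedFDeriv ℝ 2 u x ![EuclideanSpace.single i 1, EuclideanSpace.single i 1]

/-- `L_a u = −Δu + 2a (x/|x|²)·∇u`, the self-adjoint operator on
`L²(ℝ^d, |x|^{−2a} dx)` associated with `∫ |∇u|² |x|^{−2a} dx`. -/
def opLa (d : ℕ) (a : ℝ) (u : EuclideanSpace ℝ (Fin d) → ℝ)
    (x : EuclideanSpace ℝ (Fin d)) : ℝ :=
  -(lap d u x) + 2 * a * ⟪x, gradient u x⟫ / ‖x‖ ^ 2


section helpers
variable {d : ℕ} {u : EuclideanSpace ℝ (Fin d) → ℝ}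

lemma TestAwayFromZero.cont_of (hu : TestAwayFromZero d u) {f : EuclideanSpace ℝ (Fin d) → ℝ}
    (hf : ContinuousOn f {0}ᶜ) (h0 : ∀ x ∉ tsupport u, f x = 0) :
    Continuous f ∧ HasCompactSupport f := by
  constructor
  · rw [continuous_iff_continuousAt]
    intro x
    by_cases hx : x = 0
    · subst hx
      have : f =ᶠ[nhds 0] fun _ => 0 := by
        filter_upwards [(isClosed_tsupport u).isOpen_compl.mem_nhds hu.2.2] with y hy
        exact h0 y hy
      exact (continuousAt_const).congr this.symm
    · exact hf.continuousAt (isOpen_compl_singleton.mem_nhds hx)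
  · exact HasCompactSupport.of_support_subset_isCompact hu.2.1 (fun x hx => by
      by_contra h
      exact hx (h0 x h))

lemma TestAwayFromZero.integrable_of (hu : TestAwayFromZero d u)
    {f : EuclideanSpace ℝ (Fin d) → ℝ}
    (hf : ContinuousOn f {0}ᶜ) (h0 : ∀ x ∉ tsupport u, f x = 0) : Integrable f :=
  (hu.cont_of hf h0).1.integrable_of_hasCompactSupport (hu.cont_of hf h0).2

lemma u_zero_of {x : EuclideanSpace ℝ (Fin d)} (hx : x ∉ tsupport u) : u x = 0 :=
  image_eq_zero_of_notMem_tsupport hx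

lemma fd_zero_of {x : EuclideanSpace ℝ (Fin d)} (hx : x ∉ tsupport u) : fderiv ℝ u x = 0 := by
  have := (support_fderiv_subset ℝ (f := u))
  by_contra h
  exact hx (this h)

lemma cont_norm_rpow (γ : ℝ) :
    ContinuousOn (fun x : EuclideanSpace ℝ (Fin d) => ‖x‖ ^ γ) {0}ᶜ := by
  apply ContinuousOn.rpow_const continuous_norm.continuousOn
  intro x hx
  left
  simpa using hx

lemma TestAwayFromZero.cont (hu : TestAwayFromZero d u) : Continuous u := hu.1.continuous
lemma TestAwayFromZero.cfd (hu : TestAwayFromZero d u) : Continuous (fderiv ℝ u) :=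
  hu.1.continuous_fderiv (by simp)
lemma TestAwayFromZero.diff (hu : TestAwayFromZero d u) : Differentiable ℝ u :=
  hu.1.differentiable (by simp)

lemma TestAwayFromZero.of_supp {w : EuclideanSpace ℝ (Fin d) → ℝ} (hu : TestAwayFromZero d u)
    (hw : ∀ x, x ≠ 0 → ContDiffAt ℝ (⊤ : ℕ∞) w x) (h0 : ∀ x, u x = 0 → w x = 0) :
    TestAwayFromZero d w := by
  have hs : tsupport w ⊆ tsupport u := closure_mono (fun x hx h => hx (h0 x h))
  refine ⟨?_, hu.2.1.of_isClosed_subset (isClosed_tsupport _) hs, fun h => hu.2.2 (hs h)⟩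
  rw [contDiff_iff_contDiffAt]
  intro x
  by_cases hx : x = 0
  · subst hx
    have : w =ᶠ[nhds 0] fun _ => 0 := by
      filter_upwards [(isClosed_tsupport u).isOpen_compl.mem_nhds hu.2.2] with y hy
      exact h0 y (u_zero_of hy)
    exact contDiffAt_const.congr_of_eventuallyEq this
  · exact hw x hx

lemma TestAwayFromZero.pow (hu : TestAwayFromZero d u) {m : ℕ} (hm : m ≠ 0) :
    TestAwayFromZero d (fun x => u x ^ m) :=
  hu.of_supp (fun x _ => hu.1.contDiffAt.pow m) (fun x hx => by simp [hx, hm])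

lemma TestAwayFromZero.mul_rpow (hu : TestAwayFromZero d u) (γ : ℝ) :
    TestAwayFromZero d (fun x => u x * ‖x‖ ^ γ) :=
  hu.of_supp (fun x hx => hu.1.contDiffAt.mul
    ((contDiffAt_norm ℝ hx).rpow_const_of_ne (by simpa using hx))) (fun x hx => by simp [hx])

lemma hasFDerivAt_rpow_norm (γ : ℝ) {x : EuclideanSpace ℝ (Fin d)} (hx : x ≠ 0) :
    HasFDerivAt (fun x : EuclideanSpace ℝ (Fin d) => ‖x‖ ^ γ)
      ((γ * ‖x‖ ^ (γ - 2)) • innerSL ℝ x) x := by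
  apply HasStrictFDerivAt.hasFDerivAt
  convert! (hasStrictFDerivAt_norm_sq x).rpow_const (p := γ / 2) (by simp [hx]) using 0
  simp_rw [← Real.rpow_natCast_mul (norm_nonneg _), ← Nat.cast_smul_eq_nsmul ℝ, smul_smul]
  ring_nf

lemma TestAwayFromZero.u0 (hu : TestAwayFromZero d u) : u 0 = 0 := u_zero_of hu.2.2
lemma TestAwayFromZero.fd0 (hu : TestAwayFromZero d u) : fderiv ℝ u 0 = 0 := fd_zero_of hu.2.2

lemma TestAwayFromZero.fd_mul (hu : TestAwayFromZero d u) (γ : ℝ) {x : EuclideanSpace ℝ (Fin d)}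
    (hx : x ≠ 0) : fderiv ℝ (fun x => u x * ‖x‖ ^ γ) x =
      u x • ((γ * ‖x‖ ^ (γ - 2)) • innerSL ℝ x) + (‖x‖ ^ γ) • fderiv ℝ u x :=
  ((hu.diff x).hasFDerivAt.mul (hasFDerivAt_rpow_norm γ hx)).fderiv

lemma TestAwayFromZero.fd_mul_self (hu : TestAwayFromZero d u) (γ : ℝ)
    (x : EuclideanSpace ℝ (Fin d)) : fderiv ℝ (fun x => u x * ‖x‖ ^ γ) x x =
      γ * (u x * ‖x‖ ^ γ) + ‖x‖ ^ γ * fderiv ℝ u x x := by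
  by_cases hx : x = 0
  · subst hx
    simp [hu.u0]
  · rw [hu.fd_mul γ hx]
    have h : 0 < ‖x‖ := norm_pos_iff.2 hx
    have : ‖x‖ ^ γ = ‖x‖ ^ (γ - 2) * ‖x‖ ^ 2 := by
      rw [← Real.rpow_natCast, ← Real.rpow_add h]; norm_num
    simp only [add_apply, smul_apply, smul_eq_mul,
      innerSL_apply_apply, real_inner_self_eq_norm_sq]
    rw [this]; ring

lemma TestAwayFromZero.norm_fd_mul (hu : TestAwayFromZero d u) (γ : ℝ)
    (x : EuclideanSpace ℝ (Fin d)) : ‖fderiv ℝ (fun x => u x * ‖x‖ ^ γ) x‖ ≤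
      |γ| * |u x| * ‖x‖ ^ (γ - 1) + ‖fderiv ℝ u x‖ * ‖x‖ ^ γ := by
  by_cases hx : x = 0
  · subst hx
    rw [(hu.mul_rpow γ).fd0]
    simp [hu.u0, hu.fd0]
  · rw [hu.fd_mul γ hx]
    have h : 0 < ‖x‖ := norm_pos_iff.2 hx
    refine (norm_add_le _ _).trans (le_of_eq ?_)
    rw [norm_smul, norm_smul, norm_smul, innerSL_apply_norm]
    have : ‖x‖ ^ (γ - 1) = ‖x‖ ^ (γ - 2) * ‖x‖ := by
      rw [← Real.rpow_add_one h.ne']; congr 1; ring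
    rw [this]
    simp only [norm_mul, Real.norm_eq_abs, abs_of_pos (Real.rpow_pos_of_pos h _)]
    ring

lemma norm_grad (x : EuclideanSpace ℝ (Fin d)) : ‖gradient u x‖ = ‖fderiv ℝ u x‖ := by
  simp [gradient]

/-- Integration by parts against the position vector. -/
lemma TestAwayFromZero.ibp (hu : TestAwayFromZero d u) :
    ∫ x, fderiv ℝ u x x = - (d * ∫ x, u x) := by
  have key : ∀ i : Fin d, Integrable (fun x : EuclideanSpace ℝ (Fin d) =>
        x i * fderiv ℝ u x (EuclideanSpace.single i 1)) ∧
      ∫ x : EuclideanSpace ℝ (Fin d), x i * fderiv ℝ u x (EuclideanSpace.single i 1)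
        = - ∫ x, u x := by
    intro i
    let P : EuclideanSpace ℝ (Fin d) →L[ℝ] ℝ := EuclideanSpace.proj i
    have hP : ∀ x, fderiv ℝ P x = P := fun x => P.fderiv
    have h1 : Integrable (fun x : EuclideanSpace ℝ (Fin d) =>
        P x * fderiv ℝ u x (EuclideanSpace.single i 1)) := by
      apply hu.integrable_of
      · exact (P.continuous.mul (hu.cfd.clm_apply continuous_const)).continuousOn
      · intro x hx; simp [fd_zero_of hx]
    have h2 : Integrable (fun x : EuclideanSpace ℝ (Fin d) => P x * u x) := by
      apply hu.integrable_of
      · exact (P.continuous.mul hu.cont).continuousOn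
      · intro x hx; simp [u_zero_of hx]
    have h3 : Integrable u := hu.integrable_of hu.cont.continuousOn (fun x hx => u_zero_of hx)
    have hs : P (EuclideanSpace.single i 1) = 1 := by simp [P]
    refine ⟨h1, ?_⟩
    have := integral_mul_fderiv_eq_neg_fderiv_mul_of_integrable (μ := volume) (f := P) (g := u)
      (v := EuclideanSpace.single i 1) (by simpa [hP, hs] using h3) h1 h2
      (fun x _ => P.differentiableAt) (fun x _ => hu.diff x)
    simp only [hP, hs, one_mul] at this
    exact this
  have hx : ∀ x : EuclideanSpace ℝ (Fin d), fderiv ℝ u x x =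
      ∑ i, x i * fderiv ℝ u x (EuclideanSpace.single i 1) := by
    intro x
    generalize fderiv ℝ u x = L
    conv_lhs => rw [← (EuclideanSpace.basisFun (Fin d) ℝ).sum_repr x]
    simp only [map_sum, map_smul, smul_eq_mul, EuclideanSpace.basisFun_apply, EuclideanSpace.basisFun_repr]
  simp_rw [hx]
  rw [integral_finsetSum _ (fun i _ => (key i).1)]
  simp [key]

/-- The energy integrand and the Hardy integrand. -/
def En (d : ℕ) (a : ℝ) (u : EuclideanSpace ℝ (Fin d) → ℝ) : ℝ :=
  ∫ x, ‖fderiv ℝ u x‖ ^ 2 * ‖x‖ ^ (-(2 * a))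
def Ha (d : ℕ) (a : ℝ) (u : EuclideanSpace ℝ (Fin d) → ℝ) : ℝ :=
  ∫ x, u x ^ 2 * ‖x‖ ^ (-(2 * a) - 2)

lemma En_nonneg (a : ℝ) : 0 ≤ En d a u := integral_nonneg fun x => by positivity
lemma Ha_nonneg (a : ℝ) : 0 ≤ Ha d a u := integral_nonneg fun x => by positivity

lemma TestAwayFromZero.intEn (hu : TestAwayFromZero d u) (a : ℝ) :
    Integrable (fun x => ‖fderiv ℝ u x‖ ^ 2 * ‖x‖ ^ (-(2 * a))) :=
  hu.integrable_of ((hu.cfd.norm.pow 2).continuousOn.mul (cont_norm_rpow _))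
    (fun x hx => by simp [fd_zero_of hx])
lemma TestAwayFromZero.intHa (hu : TestAwayFromZero d u) (a : ℝ) :
    Integrable (fun x => u x ^ 2 * ‖x‖ ^ (-(2 * a) - 2)) :=
  hu.integrable_of ((hu.cont.pow 2).continuousOn.mul (cont_norm_rpow _))
    (fun x hx => by simp [u_zero_of hx])

/-- Pointwise factorisation of the weights. -/
lemma rpow_fac (a : ℝ) {x : EuclideanSpace ℝ (Fin d)} (hx : x ≠ 0) :
    ‖x‖ ^ (-(2 * a)) = (‖x‖ ^ (-a)) ^ 2 ∧ ‖x‖ ^ (-(2 * a) - 2) = (‖x‖ ^ (-a - 1)) ^ 2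
    ∧ ‖x‖ ^ (-(2 * a) - 1) = ‖x‖ ^ (-a) * ‖x‖ ^ (-a - 1) := by
  have h : 0 < ‖x‖ := norm_pos_iff.2 hx
  refine ⟨?_, ?_, ?_⟩
  · rw [← Real.rpow_mul_natCast h.le]; congr 1; push_cast; ring
  · rw [← Real.rpow_mul_natCast h.le]; congr 1; push_cast; ring
  · rw [← Real.rpow_add h]; congr 1; ring

lemma TestAwayFromZero.hardy (hu : TestAwayFromZero d u) {a : ℝ} (ha : a < ((d : ℝ) - 2) / 2) :
    Ha d a u ≤ 4 / (d - 2 - 2 * a) ^ 2 * En d a u := by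
  set κ : ℝ := d - 2 - 2 * a with hκ
  have hκ0 : 0 < κ := by linarith
  have h2 := hu.pow (m := 2) two_ne_zero
  have h := (h2.mul_rpow (-(2 * a) - 2)).ibp
  have hfd : ∀ x, fderiv ℝ (fun x => u x ^ 2) x x = 2 * u x * fderiv ℝ u x x := by
    intro x
    rw [((hu.diff x).hasFDerivAt.pow 2).fderiv]
    simp
  have hint : Integrable (fun x => ‖x‖ ^ (-(2 * a) - 2) * (2 * u x * fderiv ℝ u x x)) := by
    apply hu.integrable_of
    · exact (cont_norm_rpow _).mul ((continuous_const.mul hu.cont).mul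
        (hu.cfd.clm_apply continuous_id)).continuousOn
    · intro x hx; simp [fd_zero_of hx]
  have e1 : ∫ x, fderiv ℝ (fun x => u x ^ 2 * ‖x‖ ^ (-(2 * a) - 2)) x x =
      (-(2 * a) - 2) * Ha d a u + ∫ x, ‖x‖ ^ (-(2 * a) - 2) * (2 * u x * fderiv ℝ u x x) := by
    simp_rw [h2.fd_mul_self, hfd]
    rw [integral_add ((hu.intHa a).const_mul _) hint, integral_const_mul]
    rfl
  rw [e1] at h
  change _ = -((d : ℝ) * Ha d a u) at h
  have e2 : -(κ / 2 * Ha d a u + 2 / κ * En d a u) ≤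
      ∫ x, ‖x‖ ^ (-(2 * a) - 2) * (2 * u x * fderiv ℝ u x x) := by
    unfold Ha En
    rw [← integral_const_mul, ← integral_const_mul, ← integral_add ((hu.intHa a).const_mul _)
      ((hu.intEn a).const_mul _), ← integral_neg]
    refine integral_mono (((hu.intHa a).const_mul _).add ((hu.intEn a).const_mul _)).neg hint ?_
    intro x
    by_cases hx : x = 0
    · subst hx; simp [hu.u0, hu.fd0]
    have hpos : 0 < ‖x‖ := norm_pos_iff.2 hx
    obtain ⟨f1, f2, -⟩ := rpow_fac a hx
    have f4 : ‖x‖ ^ (-a) = ‖x‖ ^ (-a - 1) * ‖x‖ := by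
      rw [← Real.rpow_add_one hpos.ne']; congr 1; ring
    have hle := (fderiv ℝ u x).le_opNorm x
    rw [Real.norm_eq_abs] at hle
    simp only
    rw [f1, f2, f4]
    set s := ‖x‖ ^ (-a - 1)
    set r := ‖x‖
    set D := ‖fderiv ℝ u x‖
    set t := fderiv ℝ u x x
    have hD : 0 ≤ D := norm_nonneg _
    have ht : t ^ 2 ≤ D ^ 2 * r ^ 2 := by
      rw [← mul_pow, ← sq_abs t]; gcongr
    have : 0 ≤ κ / 2 * (u x + 2 / κ * t) ^ 2 := by positivity
    have e : κ / 2 * (u x + 2 / κ * t) ^ 2 = κ / 2 * u x ^ 2 + 2 * u x * t + 2 / κ * t ^ 2 := by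
      field_simp; ring
    have ht' : 2 / κ * t ^ 2 ≤ 2 / κ * (D ^ 2 * r ^ 2) := by gcongr
    have fin : 0 ≤ s ^ 2 * (κ / 2 * u x ^ 2 + 2 * u x * t + 2 / κ * (D ^ 2 * r ^ 2)) := by
      apply mul_nonneg (sq_nonneg _); linarith
    linarith [fin]
  have e3 : κ / 2 * Ha d a u ≤ 2 / κ * En d a u := by
    have : κ * Ha d a u = ((d : ℝ) - 2 - 2 * a) * Ha d a u := by rw [hκ]
    linarith
  calc Ha d a u = 2 / κ * (κ / 2 * Ha d a u) := by field_simp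
    _ ≤ 2 / κ * (2 / κ * En d a u) := by gcongr
    _ = _ := by field_simp; ring

/-- The left-hand side integral, in Emden-Fowler form. -/
def In (d : ℕ) (a q : ℝ) (u : EuclideanSpace ℝ (Fin d) → ℝ) : ℝ :=
  ∫ x, |u x| ^ q * ‖x‖ ^ ((((d : ℝ) - 2) / 2 - a) * q - d)

lemma TestAwayFromZero.intIn (hu : TestAwayFromZero d u) (a : ℝ) {q : ℝ} (hq : 0 < q) :
    Integrable (fun x => |u x| ^ q * ‖x‖ ^ ((((d : ℝ) - 2) / 2 - a) * q - d)) :=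
  hu.integrable_of ((hu.cont.abs.rpow_const (fun _ => Or.inr hq.le)).continuousOn.mul
    (cont_norm_rpow _)) (fun x hx => by simp [u_zero_of hx, hq.ne'])

lemma In_nonneg (a q : ℝ) : 0 ≤ In d a q u := integral_nonneg fun x => by positivity

lemma young_aux {G s p q : ℝ} (hG : 0 ≤ G) (hs : 0 < s) (hp : 2 ≤ p) (hq : p ≤ q) :
    G ^ p ≤ s ^ (2 - p) * G ^ (2 : ℝ) + s ^ (q - p) * G ^ q := by
  have h : (s * G) ^ p ≤ (s * G) ^ (2 : ℝ) + (s * G) ^ q := by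
    have h0 : 0 ≤ s * G := by positivity
    rcases le_total (s * G) 1 with h1 | h1
    · have := Real.rpow_le_rpow_of_exponent_ge' h0 h1 (by norm_num) hp
      have h2 := Real.rpow_nonneg h0 q
      linarith
    · have := Real.rpow_le_rpow_of_exponent_le h1 hq
      have h2 := Real.rpow_nonneg h0 2
      linarith
  rw [Real.mul_rpow hs.le hG, Real.mul_rpow hs.le hG, Real.mul_rpow hs.le hG] at h
  have hsp : 0 < s ^ p := Real.rpow_pos_of_pos hs p
  rw [Real.rpow_sub hs, Real.rpow_sub hs]
  have : s ^ (2:ℝ) / s ^ p * G ^ (2:ℝ) + s ^ q / s ^ p * G ^ q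
      = (s ^ (2:ℝ) * G ^ (2:ℝ) + s ^ q * G ^ q) / s ^ p := by ring
  rw [this, le_div_iff₀ hsp]
  linarith

lemma TestAwayFromZero.interp (hu : TestAwayFromZero d u) {a p q s : ℝ} (hs : 0 < s)
    (hp : 2 ≤ p) (hq : p ≤ q) :
    In d a p u ≤ s ^ (2 - p) * Ha d a u + s ^ (q - p) * In d a q u := by
  unfold In Ha
  rw [← integral_const_mul, ← integral_const_mul, ← integral_add ((hu.intHa a).const_mul _)
    ((hu.intIn a (by linarith)).const_mul _)]
  refine integral_mono (hu.intIn a (by linarith)) (((hu.intHa a).const_mul _).add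
    ((hu.intIn a (by linarith)).const_mul _)) ?_
  intro x
  by_cases hx : x = 0
  · subst hx
    have hp0 : p ≠ 0 := by linarith
    have hq0 : q ≠ 0 := by linarith
    simp [hu.u0, hp0, hq0]
  have h : 0 < ‖x‖ := norm_pos_iff.2 hx
  have key : ∀ r : ℝ, |u x| ^ r * ‖x‖ ^ ((((d : ℝ) - 2) / 2 - a) * r - d) =
      (|u x| * ‖x‖ ^ (((d : ℝ) - 2) / 2 - a)) ^ r * ‖x‖ ^ (-(d : ℝ)) := by
    intro r
    rw [Real.mul_rpow (abs_nonneg _) (by positivity), ← Real.rpow_mul h.le, mul_assoc,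
      ← Real.rpow_add h]
    rfl
  have k2 : u x ^ 2 * ‖x‖ ^ (-(2 * a) - 2) =
      (|u x| * ‖x‖ ^ (((d : ℝ) - 2) / 2 - a)) ^ (2 : ℝ) * ‖x‖ ^ (-(d : ℝ)) := by
    rw [← key 2, Real.rpow_two, sq_abs]
    congr 2; ring
  simp only
  rw [key, key, k2]
  have := young_aux (G := |u x| * ‖x‖ ^ (((d : ℝ) - 2) / 2 - a)) (by positivity) hs hp hq
  have h3 : 0 < ‖x‖ ^ (-(d : ℝ)) := by positivity
  nlinarith [mul_le_mul_of_nonneg_right this h3.le]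

lemma endpoint_to_all {d : ℕ} {a p q C : ℝ} (ha : a < ((d : ℝ) - 2) / 2) (hp : 2 ≤ p) (hq : p ≤ q)
    (hC : 0 ≤ C)
    (H : ∀ u : EuclideanSpace ℝ (Fin d) → ℝ, TestAwayFromZero d u →
      In d a q u ≤ C * En d a u ^ (q / 2)) :
    ∃ C' : ℝ, 0 < C' ∧ ∀ u : EuclideanSpace ℝ (Fin d) → ℝ, TestAwayFromZero d u →
      In d a p u ≤ C' * En d a u ^ (p / 2) := by
  have hκ0 : 0 < (d : ℝ) - 2 - 2 * a := by linarith
  refine ⟨4 / (d - 2 - 2 * a) ^ 2 + C, by positivity, fun u hu => ?_⟩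
  set K := 4 / ((d : ℝ) - 2 - 2 * a) ^ 2 with hK
  have hK0 : 0 < K := by positivity
  have h1 : Ha d a u ≤ K * En d a u := hu.hardy ha
  have h2 := H u hu
  rcases (En_nonneg (u := u) (d := d) a).eq_or_lt with h0 | h0
  · have h3 := hu.interp (a := a) one_pos hp hq
    rw [← h0] at h1 h2 ⊢
    rw [Real.zero_rpow (by linarith)] at h2 ⊢
    simp at h3
    linarith
  · have hs : 0 < En d a u ^ (-(1 / 2 : ℝ)) := Real.rpow_pos_of_pos h0 _
    have h3 := hu.interp (a := a) hs hp hq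
    rw [← Real.rpow_mul h0.le, ← Real.rpow_mul h0.le] at h3
    refine h3.trans ?_
    have e1 : En d a u ^ (p / 2) = En d a u ^ (-(1 / 2 : ℝ) * (2 - p)) * En d a u := by
      rw [← Real.rpow_add_one h0.ne']; congr 1; ring
    have e2 : En d a u ^ (p / 2) = En d a u ^ (-(1 / 2 : ℝ) * (q - p)) * En d a u ^ (q / 2) := by
      rw [← Real.rpow_add h0]; congr 1; ring
    rw [add_mul]
    apply add_le_add
    · rw [e1]
      calc _ ≤ En d a u ^ (-(1 / 2 : ℝ) * (2 - p)) * (K * En d a u) := by gcongr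
        _ = _ := by ring
    · rw [e2]
      calc _ ≤ En d a u ^ (-(1 / 2 : ℝ) * (q - p)) * (C * En d a u ^ (q / 2)) := by gcongr
        _ = _ := by ring

/-- Cauchy-Schwarz. -/
lemma cs_aux {f g : EuclideanSpace ℝ (Fin d) → ℝ} (hf : Integrable (fun x => f x ^ 2))
    (hg : Integrable (fun x => g x ^ 2)) (hfg : Integrable (fun x => f x * g x)) :
    (∫ x, f x * g x) ^ 2 ≤ (∫ x, f x ^ 2) * ∫ x, g x ^ 2 := by
  have : ∀ t : ℝ, 0 ≤ (∫ x, f x ^ 2) * (t * t) + (2 * ∫ x, f x * g x) * t + ∫ x, g x ^ 2 := by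
    intro t
    have : (∫ x, f x ^ 2) * (t * t) + (2 * ∫ x, f x * g x) * t + ∫ x, g x ^ 2
        = ∫ x, (t * f x + g x) ^ 2 := by
      have e : ∀ x, (t * f x + g x) ^ 2 = (t * t) * f x ^ 2 + (2 * t) * (f x * g x) + g x ^ 2 := by
        intro x; ring
      simp_rw [e]
      have hI : Integrable (fun x => (t * t) * f x ^ 2 + (2 * t) * (f x * g x)) :=
        (hf.const_mul _).add (hfg.const_mul _)
      rw [integral_add hI hg,
        integral_add (hf.const_mul _) (hfg.const_mul _), integral_const_mul, integral_const_mul]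
      ring
    rw [this]
    exact integral_nonneg fun x => sq_nonneg _
  have := discrim_le_zero this
  unfold discrim at this
  nlinarith

/-- Final assembly from the `In` form. -/
lemma finish {d : ℕ} {a b p : ℝ} (hb : b = a - ((d : ℝ) - 2) / 2 + (d : ℝ) / p) (hp : 2 ≤ p)
    (H : ∃ C' : ℝ, 0 < C' ∧ ∀ u : EuclideanSpace ℝ (Fin d) → ℝ, TestAwayFromZero d u →
      In d a p u ≤ C' * En d a u ^ (p / 2)) :
    ∃ C : ℝ, 0 < C ∧ ∀ u : EuclideanSpace ℝ (Fin d) → ℝ, TestAwayFromZero d u →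
      (∫ x, |u x| ^ p * ‖x‖ ^ (-(b * p))) ^ ((2 : ℝ) / p) ≤
        C * ∫ x, ‖gradient u x‖ ^ 2 * ‖x‖ ^ (-(2 * a)) := by
  obtain ⟨C, hC, H⟩ := H
  refine ⟨C ^ (2 / p), by positivity, fun u hu => ?_⟩
  have hp0 : 0 < p := by linarith
  have e : -(b * p) = (((d : ℝ) - 2) / 2 - a) * p - d := by
    rw [hb]; field_simp; ring
  rw [e]
  simp_rw [norm_grad]
  change In d a p u ^ (2 / p) ≤ _ * En d a u
  calc In d a p u ^ (2 / p) ≤ (C * En d a u ^ (p / 2)) ^ (2 / p) := by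
        apply Real.rpow_le_rpow (In_nonneg _ _) (H u hu) (by positivity)
    _ = _ := by
      rw [Real.mul_rpow hC.le (Real.rpow_nonneg (En_nonneg _) _), ← Real.rpow_mul (En_nonneg _)]
      have : p / 2 * (2 / p) = 1 := by field_simp
      rw [this, Real.rpow_one]

/-- Sobolev endpoint for `d ≥ 3`. -/
lemma endpoint_three {d : ℕ} (hd : 3 ≤ d) {a : ℝ} (ha : a < ((d : ℝ) - 2) / 2) :
    ∃ C : ℝ, 0 ≤ C ∧ ∀ u : EuclideanSpace ℝ (Fin d) → ℝ, TestAwayFromZero d u →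
      In d a (2 * d / (d - 2)) u ≤ C * En d a u ^ ((2 * d / (d - 2) : ℝ) / 2) := by
  have hd' : (3 : ℝ) ≤ d := by exact_mod_cast hd
  have hd2 : (0 : ℝ) < d - 2 := by linarith
  set q : ℝ := 2 * d / (d - 2) with hq
  have hq0 : 0 < q := by positivity
  set K := 4 / ((d : ℝ) - 2 - 2 * a) ^ 2 with hK
  have hK0 : 0 ≤ K := by positivity
  let S : NNReal := SNormLESNormFDerivOfEqConst ℝ (volume : Measure (EuclideanSpace ℝ (Fin d))) 2
  refine ⟨(S : ℝ) ^ q * (2 * a ^ 2 * K + 2) ^ (q / 2), by positivity, fun u hu => ?_⟩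
  have hv := hu.mul_rpow (-a)
  set v : EuclideanSpace ℝ (Fin d) → ℝ := fun x => u x * ‖x‖ ^ (-a) with hvdef
  have hsob := eLpNorm_le_eLpNorm_fderiv_of_eq (F := ℝ)
    (μ := (volume : Measure (EuclideanSpace ℝ (Fin d)))) (u := v)
    (hv.1.of_le (by exact_mod_cast le_top)) hv.2.1 (p := 2) (p' := q.toNNReal) (by norm_num)
    (by simp; omega) (by
      simp only [Real.coe_toNNReal q hq0.le, finrank_euclideanSpace, Fintype.card_fin]
      rw [hq]
      push_cast
      field_simp)
  have e1 : In d a q u = ∫ x, ‖v x‖ ^ q := by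
    unfold In
    congr 1; ext x
    by_cases hx : x = 0
    · subst hx; simp [hvdef, hu.u0, hq0.ne']
    have h : 0 < ‖x‖ := norm_pos_iff.2 hx
    rw [hvdef, norm_mul, Real.norm_eq_abs, Real.norm_eq_abs, abs_of_pos (Real.rpow_pos_of_pos h _),
      Real.mul_rpow (abs_nonneg _) (by positivity), ← Real.rpow_mul h.le]
    congr 2
    rw [hq]; field_simp; ring
  have hvi : MemLp v (ENNReal.ofReal q) volume := hv.cont.memLp_of_hasCompactSupport hv.2.1
  have hdi : MemLp (fderiv ℝ v) 2 volume :=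
    hv.cfd.memLp_of_hasCompactSupport (hv.2.1.fderiv (𝕜 := ℝ))
  have en1 : ((q.toNNReal : NNReal) : ENNReal) = ENNReal.ofReal q := rfl
  have en2 : ((2 : NNReal) : ENNReal) = 2 := by norm_num
  rw [en1, en2, hvi.eLpNorm_eq_integral_rpow_norm (by simpa using hq0) (by simp),
    hdi.eLpNorm_eq_integral_rpow_norm (by simp) (by simp), ENNReal.toReal_ofReal hq0.le] at hsob
  change _ ≤ (S : ENNReal) * _ at hsob
  rw [← ENNReal.ofReal_coe_nnreal, ← ENNReal.ofReal_mul S.coe_nonneg,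
    ENNReal.ofReal_le_ofReal_iff (by positivity)] at hsob
  simp only [ENNReal.toReal_ofNat, Real.rpow_two] at hsob
  have e2 : ∫ x, ‖fderiv ℝ v x‖ ^ 2 ≤ (2 * a ^ 2 * K + 2) * En d a u := by
    calc ∫ x, ‖fderiv ℝ v x‖ ^ 2 ≤ 2 * a ^ 2 * Ha d a u + 2 * En d a u := by
          unfold Ha En
          rw [← integral_const_mul, ← integral_const_mul,
            ← integral_add ((hu.intHa a).const_mul _) ((hu.intEn a).const_mul _)]
          refine integral_mono ?_ (((hu.intHa a).const_mul _).add ((hu.intEn a).const_mul _)) ?_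
          · exact hv.integrable_of (hv.cfd.norm.pow 2).continuousOn
              (fun x hx => by simp [fd_zero_of hx])
          intro x
          by_cases hx : x = 0
          · subst hx; simp [hu.u0, hu.fd0, hv.fd0]
          obtain ⟨f1, f2, -⟩ := rpow_fac a hx
          have h := hu.norm_fd_mul (-a) x
          simp only
          rw [f1, f2]
          have h' : ‖fderiv ℝ v x‖ ^ 2 ≤
            (|-a| * |u x| * ‖x‖ ^ (-a - 1) + ‖fderiv ℝ u x‖ * ‖x‖ ^ (-a)) ^ 2 := by gcongr
          refine h'.trans ?_
          refine (add_sq_le).trans (le_of_eq ?_)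
          rw [mul_pow, mul_pow, sq_abs, sq_abs]; ring
      _ ≤ 2 * a ^ 2 * (K * En d a u) + 2 * En d a u := by
          gcongr; exact hu.hardy ha
      _ = _ := by ring
  have hn : 0 ≤ ∫ x, ‖v x‖ ^ q := integral_nonneg fun x => by positivity
  have hn2 : 0 ≤ ∫ x, ‖fderiv ℝ v x‖ ^ 2 := integral_nonneg fun x => by positivity
  rw [e1]
  calc ∫ x, ‖v x‖ ^ q = ((∫ x, ‖v x‖ ^ q) ^ q⁻¹) ^ q := by
        rw [← Real.rpow_mul hn, inv_mul_cancel₀ hq0.ne', Real.rpow_one]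
    _ ≤ (S * (∫ x, ‖fderiv ℝ v x‖ ^ 2) ^ (2 : ℝ)⁻¹) ^ q := by gcongr
    _ = (S : ℝ) ^ q * (∫ x, ‖fderiv ℝ v x‖ ^ 2) ^ (q / 2) := by
        rw [Real.mul_rpow (by positivity) (by positivity), ← Real.rpow_mul hn2]
        congr 2; ring
    _ ≤ (S : ℝ) ^ q * ((2 * a ^ 2 * K + 2) * En d a u) ^ (q / 2) := by gcongr
    _ = _ := by
        rw [Real.mul_rpow (by positivity) (En_nonneg _)]; ring

/-- Supremum bound in dimension one. -/
lemma sup_one {h : EuclideanSpace ℝ (Fin 1) → ℝ} (hh : TestAwayFromZero 1 h)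
    (x : EuclideanSpace ℝ (Fin 1)) : |h x| ≤ ∫ y, ‖fderiv ℝ h y‖ := by
  let e : EuclideanSpace ℝ (Fin 1) := EuclideanSpace.single 0 1
  have hint : Integrable (fun y => ‖fderiv ℝ h y‖) :=
    hh.integrable_of hh.cfd.norm.continuousOn (fun x hx => by simp [fd_zero_of hx])
  have mp : MeasurePreserving (fun t : ℝ => t • e) volume volume := by
    have := ((volume_preserving_funUnique (Fin 1) ℝ).symm _).trans
      (EuclideanSpace.volume_preserving_symm_measurableEquiv_toLp (Fin 1)).symm
    have hf : (fun t : ℝ => t • e) = ⇑((MeasurableEquiv.funUnique (Fin 1) ℝ).symm.trans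
        (MeasurableEquiv.toLp 2 (Fin 1 → ℝ)).symm.symm) := by
      funext t
      ext i
      fin_cases i
      simp [e]
    rw [hf]
    exact this
  have hemb : MeasurableEmbedding (fun t : ℝ => t • e) := by
    apply Continuous.measurableEmbedding (by fun_prop)
    exact smul_left_injective ℝ (by simp [e])
  have hcl : Topology.IsClosedEmbedding (fun t : ℝ => t • e) :=
    isClosedEmbedding_smul_left (by simp [e])
  have hx : x = (x 0) • e := by
    ext i; fin_cases i; simp [e]
  have hcd : ContDiff ℝ 1 (fun t : ℝ => h (t • e)) :=
    (hh.1.of_le (by exact_mod_cast le_top)).comp (contDiff_id.smul contDiff_const)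
  have hc : HasCompactSupport (fun t : ℝ => h (t • e)) := hh.2.1.comp_isClosedEmbedding hcl
  have main := HasCompactSupport.enorm_le_lintegral_Ici_deriv hcd hc (x 0)
  have hder : ∀ t, ‖deriv (fun t : ℝ => h (t • e)) t‖ₑ ≤ ‖fderiv ℝ h (t • e)‖ₑ := by
    intro t
    have h1 : HasDerivAt (fun t : ℝ => t • e) e t := by
      simpa using (hasDerivAt_id t).smul_const e
    have h2 := (hh.diff (t • e)).hasFDerivAt.comp_hasDerivAt t h1
    have h3 : deriv (fun t : ℝ => h (t • e)) t = fderiv ℝ h (t • e) e := h2.deriv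
    rw [h3, enorm_le_iff_norm_le]
    refine ((fderiv ℝ h (t • e)).le_opNorm e).trans ?_
    simp [e]
  have m2 : ‖h x‖ₑ ≤ ∫⁻ y, ‖fderiv ℝ h y‖ₑ := by
    calc ‖h x‖ₑ = ‖h (x 0 • e)‖ₑ := by rw [← hx]
      _ ≤ ∫⁻ t in Set.Iic (x 0), ‖deriv (fun t : ℝ => h (t • e)) t‖ₑ := main
      _ ≤ ∫⁻ t, ‖deriv (fun t : ℝ => h (t • e)) t‖ₑ := setLIntegral_le_lintegral _ _
      _ ≤ ∫⁻ t : ℝ, ‖fderiv ℝ h (t • e)‖ₑ := lintegral_mono hder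
      _ = _ := mp.lintegral_comp_emb hemb (fun y => ‖fderiv ℝ h y‖ₑ)
  have hi' : Integrable (fderiv ℝ h) := hh.cfd.integrable_of_hasCompactSupport (hh.2.1.fderiv (𝕜 := ℝ))
  rw [← ofReal_integral_norm_eq_lintegral_enorm hi', ← ofReal_norm,
    ENNReal.ofReal_le_ofReal_iff (integral_nonneg fun _ => norm_nonneg _)] at m2
  exact m2

lemma dim_one {a p : ℝ} (ha : a < (((1 : ℕ) : ℝ) - 2) / 2) (hp : 2 ≤ p) :
    ∃ C : ℝ, 0 < C ∧ ∀ u : EuclideanSpace ℝ (Fin 1) → ℝ, TestAwayFromZero 1 u →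
      In 1 a p u ≤ C * En 1 a u ^ (p / 2) := by
  set K := 4 / (((1 : ℕ) : ℝ) - 2 - 2 * a) ^ 2 with hK
  have hκ0 : 0 < ((1 : ℕ) : ℝ) - 2 - 2 * a := by
    push_cast at ha ⊢; linarith
  have hK0 : 0 < K := by positivity
  set M := (|-(2 * a) - 1| + 1) * K + 1 with hM
  have hM0 : 0 < M := by positivity
  refine ⟨M ^ ((p - 2) / 2) * K, by positivity, fun u hu => ?_⟩
  have hE := En_nonneg (u := u) a
  have h2 := hu.pow (m := 2) two_ne_zero
  have hh := h2.mul_rpow (-(2 * a) - 1)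
  have hsup : ∀ x, u x ^ 2 * ‖x‖ ^ (-(2 * a) - 1) ≤ M * En 1 a u := by
    intro x
    refine (le_abs_self _).trans ((sup_one hh x).trans ?_)
    calc _ ≤ (|-(2 * a) - 1| + 1) * Ha 1 a u + En 1 a u := by
          unfold Ha En
          rw [← integral_const_mul, ← integral_add ((hu.intHa a).const_mul _) (hu.intEn a)]
          refine integral_mono ?_ (((hu.intHa a).const_mul _).add (hu.intEn a)) ?_
          · exact hh.integrable_of hh.cfd.norm.continuousOn (fun x hx => by simp [fd_zero_of hx])
          intro x
          by_cases hx : x = 0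
          · subst hx; simp [hu.u0, hu.fd0, hh.fd0]
          refine (h2.norm_fd_mul (-(2 * a) - 1) x).trans ?_
          obtain ⟨f1, f2, f3⟩ := rpow_fac a hx
          have e : -(2 * a) - 1 - 1 = -(2 * a) - 2 := by ring
          have hfd : ‖fderiv ℝ (fun x => u x ^ 2) x‖ = 2 * |u x| * ‖fderiv ℝ u x‖ := by
            rw [((hu.diff x).hasFDerivAt.pow 2).fderiv]
            simp [norm_smul]
          rw [e, hfd]
          simp only
          rw [f1, f2, f3, abs_of_nonneg (sq_nonneg (u x)), ← sq_abs (u x)]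
          nlinarith [sq_nonneg (|u x| * ‖x‖ ^ (-a - 1) - ‖fderiv ℝ u x‖ * ‖x‖ ^ (-a))]
      _ ≤ (|-(2 * a) - 1| + 1) * (K * En 1 a u) + En 1 a u := by
          gcongr; exact hu.hardy ha
      _ = _ := by rw [hM]; ring
  have hB : 0 ≤ M * En 1 a u := by positivity
  have step : In 1 a p u ≤ (M * En 1 a u) ^ ((p - 2) / 2) * Ha 1 a u := by
    unfold In Ha
    rw [← integral_const_mul]
    refine integral_mono (hu.intIn a (by linarith)) ((hu.intHa a).const_mul _) ?_
    intro x
    by_cases hx : x = 0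
    · subst hx
      have hp0 : p ≠ 0 := by linarith
      simp [hu.u0, hp0]
    have h : 0 < ‖x‖ := norm_pos_iff.2 hx
    have e : |u x| ^ p * ‖x‖ ^ (((((1 : ℕ) : ℝ) - 2) / 2 - a) * p - (1 : ℕ)) =
        (u x ^ 2 * ‖x‖ ^ (-(2 * a) - 1)) ^ ((p - 2) / 2) * (u x ^ 2 * ‖x‖ ^ (-(2 * a) - 2)) := by
      rw [Real.mul_rpow (sq_nonneg _) (by positivity), ← sq_abs, ← Real.rpow_two,
        ← Real.rpow_mul (abs_nonneg _), ← Real.rpow_mul h.le, mul_mul_mul_comm,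
        ← Real.rpow_add h, ← Real.rpow_add_of_nonneg (abs_nonneg _) (by linarith) (by norm_num)]
      congr 2
      · ring
      · push_cast; ring
    simp only
    rw [e]
    have := hsup x
    have : 0 ≤ (p - 2) / 2 := by linarith
    gcongr
  calc _ ≤ _ := step
    _ ≤ (M * En 1 a u) ^ ((p - 2) / 2) * (K * En 1 a u) := by
        gcongr; exact hu.hardy ha
    _ = _ := by
        rw [Real.mul_rpow hM0.le hE]
        have : En 1 a u ^ (p / 2) = En 1 a u ^ ((p - 2) / 2) * En 1 a u := by
          rw [← Real.rpow_add_one' hE (by linarith)]; congr 1; ring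
        rw [this]; ring

/-- The `L¹` Gagliardo-Nirenberg inequality in the plane. -/
lemma gn_two : ∃ S : ℝ, 0 ≤ S ∧ ∀ w : EuclideanSpace ℝ (Fin 2) → ℝ, TestAwayFromZero 2 w →
    ∫ x, w x ^ 2 ≤ S * (∫ x, ‖fderiv ℝ w x‖) ^ 2 := by
  let S : NNReal :=
    lintegralPowLePowLIntegralFDerivConst (volume : Measure (EuclideanSpace ℝ (Fin 2))) 2
  refine ⟨S, S.coe_nonneg, fun w hw => ?_⟩
  have h := lintegral_pow_le_pow_lintegral_fderiv
    (volume : Measure (EuclideanSpace ℝ (Fin 2))) (u := w)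
    (hw.1.of_le (by exact_mod_cast le_top)) hw.2.1 (p := 2) (by
      simp only [finrank_euclideanSpace, Fintype.card_fin]
      exact ⟨by norm_num, by norm_num, by norm_num⟩)
  have hi : Integrable (fderiv ℝ w) :=
    hw.cfd.integrable_of_hasCompactSupport (hw.2.1.fderiv (𝕜 := ℝ))
  have hi2 : Integrable (fun x => w x ^ 2) := hw.integrable_of (hw.cont.pow 2).continuousOn
    (fun x hx => by simp [u_zero_of hx])
  have e : ∀ x, ‖w x‖ₑ ^ (2 : ℝ) = ‖w x ^ 2‖ₑ := by
    intro x; rw [ENNReal.rpow_two, enorm_pow]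
  simp_rw [e] at h
  rw [← ofReal_integral_norm_eq_lintegral_enorm hi, ← ofReal_integral_norm_eq_lintegral_enorm hi2,
    ENNReal.rpow_two, ← ENNReal.ofReal_pow (integral_nonneg fun _ => norm_nonneg _)] at h
  change _ ≤ (S : ENNReal) * _ at h
  rw [← ENNReal.ofReal_coe_nnreal, ← ENNReal.ofReal_mul S.coe_nonneg,
    ENNReal.ofReal_le_ofReal_iff (by positivity)] at h
  simpa using h

lemma ckn_even_two {a : ℝ} (ha : a < (((2 : ℕ) : ℝ) - 2) / 2) (m : ℕ) (hm : 1 ≤ m) :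
    ∃ C : ℝ, 0 ≤ C ∧ ∀ u : EuclideanSpace ℝ (Fin 2) → ℝ, TestAwayFromZero 2 u →
      ∫ x, (u x ^ m * ‖x‖ ^ (-(m * a) - 1)) ^ 2 ≤ C * En 2 a u ^ m := by
  set K := 4 / (((2 : ℕ) : ℝ) - 2 - 2 * a) ^ 2 with hK
  have hK0 : 0 ≤ K := by positivity
  induction m, hm using Nat.le_induction with
  | base =>
    refine ⟨K, hK0, fun u hu => ?_⟩
    have : ∫ x, (u x ^ 1 * ‖x‖ ^ (-((1 : ℕ) * a) - 1)) ^ 2 = Ha 2 a u := by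
      unfold Ha
      congr 1; ext x
      by_cases hx : x = 0
      · subst hx; simp [hu.u0]
      rw [(rpow_fac a hx).2.1]
      simp [mul_pow]
    rw [this, pow_one]
    exact hu.hardy ha
  | succ m hm ih =>
    obtain ⟨C, hC, ih⟩ := ih
    obtain ⟨S, hS, gn⟩ := gn_two
    set γ : ℝ := -((m + 1 : ℕ) * a) - 1 with hγ
    set B : ℝ := 2 * γ ^ 2 * K + 2 * (m + 1) ^ 2 with hB
    refine ⟨S * (C * B), by positivity, fun u hu => ?_⟩
    have hE := En_nonneg (u := u) a
    have hm1 := hu.pow (m := m + 1) (by omega)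
    have hm0 := hu.pow (m := m) (by omega)
    have hw := hm1.mul_rpow γ
    let F : EuclideanSpace ℝ (Fin 2) → ℝ := fun x => |u x| ^ m * ‖x‖ ^ (-(m * a) - 1)
    let G : EuclideanSpace ℝ (Fin 2) → ℝ :=
      fun x => |γ| * |u x| * ‖x‖ ^ (-a - 1) + (m + 1) * ‖fderiv ℝ u x‖ * ‖x‖ ^ (-a)
    have hFc : ContinuousOn F {0}ᶜ := (hu.cont.abs.pow m).continuousOn.mul (cont_norm_rpow _)
    have hGc : ContinuousOn G {0}ᶜ :=
      ((continuous_const.mul hu.cont.abs).continuousOn.mul (cont_norm_rpow _)).add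
      ((continuous_const.mul hu.cfd.norm).continuousOn.mul (cont_norm_rpow _))
    have hF0 : ∀ x ∉ tsupport u, F x = 0 := fun x hx => by
      have : m ≠ 0 := by omega
      simp [F, u_zero_of hx, this]
    have hG0 : ∀ x ∉ tsupport u, G x = 0 := fun x hx => by simp [G, u_zero_of hx, fd_zero_of hx]
    have iF : Integrable (fun x => F x ^ 2) :=
      hu.integrable_of (hFc.pow 2) (fun x hx => by simp [hF0 x hx])
    have iG : Integrable (fun x => G x ^ 2) :=
      hu.integrable_of (hGc.pow 2) (fun x hx => by simp [hG0 x hx])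
    have iFG : Integrable (fun x => F x * G x) :=
      hu.integrable_of (hFc.mul hGc) (fun x hx => by simp [hF0 x hx])
    have s1 : ∫ x, ‖fderiv ℝ (fun x => u x ^ (m + 1) * ‖x‖ ^ γ) x‖ ≤ ∫ x, F x * G x := by
      refine integral_mono ?_ iFG ?_
      · exact hw.integrable_of hw.cfd.norm.continuousOn (fun x hx => by simp [fd_zero_of hx])
      intro x
      refine (hm1.norm_fd_mul γ x).trans (le_of_eq ?_)
      by_cases hx : x = 0
      · subst hx; simp [hu.u0, hm1.fd0, F, G, hu.fd0]
      have h : 0 < ‖x‖ := norm_pos_iff.2 hx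
      have hfd : ‖fderiv ℝ (fun x => u x ^ (m + 1)) x‖ = (m + 1) * |u x| ^ m * ‖fderiv ℝ u x‖ := by
        rw [((hu.diff x).hasFDerivAt.pow (m + 1)).fderiv, norm_smul]
        have : |(m : ℝ) + 1| = m + 1 := abs_of_nonneg (by positivity)
        simp [this]
      have g1 : ‖x‖ ^ (γ - 1) = ‖x‖ ^ (-(m * a) - 1) * ‖x‖ ^ (-a - 1) := by
        rw [← Real.rpow_add h, hγ]; congr 1; push_cast; ring
      have g2 : ‖x‖ ^ γ = ‖x‖ ^ (-(m * a) - 1) * ‖x‖ ^ (-a) := by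
        rw [← Real.rpow_add h, hγ]; congr 1; push_cast; ring
      rw [hfd, g1, g2, abs_pow]
      simp only [F, G]
      ring
    have s2 : ∫ x, G x ^ 2 ≤ B * En 2 a u := by
      calc ∫ x, G x ^ 2 ≤ 2 * γ ^ 2 * Ha 2 a u + 2 * (m + 1) ^ 2 * En 2 a u := by
            unfold Ha En
            rw [← integral_const_mul, ← integral_const_mul,
              ← integral_add ((hu.intHa a).const_mul _) ((hu.intEn a).const_mul _)]
            refine integral_mono iG (((hu.intHa a).const_mul _).add ((hu.intEn a).const_mul _)) ?_
            intro x
            by_cases hx : x = 0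
            · subst hx; simp [hu.u0, hu.fd0, G]
            obtain ⟨f1, f2, -⟩ := rpow_fac a hx
            simp only
            rw [f1, f2]
            refine (add_sq_le).trans (le_of_eq ?_)
            simp only [mul_pow, sq_abs]; ring
        _ ≤ 2 * γ ^ 2 * (K * En 2 a u) + 2 * (m + 1) ^ 2 * En 2 a u := by
            gcongr; exact hu.hardy ha
        _ = _ := by rw [hB]; ring
    have s3 : ∫ x, F x ^ 2 ≤ C * En 2 a u ^ m := by
      refine le_trans (le_of_eq ?_) (ih u hu)
      congr 1; ext x
      simp only [F, mul_pow, ← pow_mul, mul_comm m 2]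
      rw [pow_mul, sq_abs, ← pow_mul]
    have hB0 : 0 ≤ B := by positivity
    have hGn : 0 ≤ ∫ x, G x ^ 2 := integral_nonneg fun _ => sq_nonneg _
    calc _ ≤ S * (∫ x, ‖fderiv ℝ (fun x => u x ^ (m + 1) * ‖x‖ ^ γ) x‖) ^ 2 := gn _ hw
      _ ≤ S * (∫ x, F x * G x) ^ 2 := by
          have : 0 ≤ ∫ x, ‖fderiv ℝ (fun x => u x ^ (m + 1) * ‖x‖ ^ γ) x‖ :=
            integral_nonneg fun _ => norm_nonneg _
          gcongr
      _ ≤ S * ((∫ x, F x ^ 2) * ∫ x, G x ^ 2) := by gcongr; exact cs_aux iF iG iFG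
      _ ≤ S * ((C * En 2 a u ^ m) * (B * En 2 a u)) := by gcongr
      _ = _ := by ring

lemma dim_two {a p : ℝ} (ha : a < (((2 : ℕ) : ℝ) - 2) / 2) (hp : 2 ≤ p) :
    ∃ C : ℝ, 0 < C ∧ ∀ u : EuclideanSpace ℝ (Fin 2) → ℝ, TestAwayFromZero 2 u →
      In 2 a p u ≤ C * En 2 a u ^ (p / 2) := by
  obtain ⟨m, hm⟩ := exists_nat_ge p
  have hm1 : 1 ≤ m := by
    have : (1 : ℝ) ≤ m := by linarith
    exact_mod_cast this
  obtain ⟨C, hC, H⟩ := ckn_even_two ha m hm1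
  refine endpoint_to_all (q := 2 * m) ha hp (by linarith) hC (fun u hu => ?_)
  have e : (2 * (m : ℝ)) / 2 = m := by ring
  rw [e, Real.rpow_natCast]
  refine le_trans (le_of_eq ?_) (H u hu)
  unfold In
  congr 1; ext x
  have hm0 : m ≠ 0 := by omega
  by_cases hx : x = 0
  · subst hx; simp [hu.u0, hm0]
  have h : 0 < ‖x‖ := norm_pos_iff.2 hx
  rw [mul_pow, ← Real.rpow_mul_natCast h.le, ← pow_mul, mul_comm m 2, pow_mul, ← sq_abs, ← pow_mul,
    ← Real.rpow_natCast |u x|]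
  congr 2
  · push_cast; ring
  · push_cast; ring

end helpers

/-- the Caffarelli-Kohn-Nirenberg inequalities. -/
theorem ckn_inequality (d : ℕ) (hd : 1 ≤ d) (a b p : ℝ)
    (hadm : CKNAdmissible d a b p) :
    ∃ C : ℝ, 0 < C ∧ ∀ u : EuclideanSpace ℝ (Fin d) → ℝ, TestAwayFromZero d u →
      (∫ x, |u x| ^ p * ‖x‖ ^ (-(b * p))) ^ ((2 : ℝ) / p) ≤
        C * ∫ x, ‖gradient u x‖ ^ 2 * ‖x‖ ^ (-(2 * a)) := by
  obtain ⟨hb, hp, hp3, ha, -, -, -⟩ := hadm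
  apply finish hb hp
  rcases (by omega : d = 1 ∨ d = 2 ∨ 3 ≤ d) with h | h | h
  · subst h; exact dim_one ha hp
  · subst h; exact dim_two ha hp
  · obtain ⟨C, hC, H⟩ := endpoint_three h ha
    exact endpoint_to_all ha hp (hp3 h) hC H
end
end

section
/- Let d ≥ 1, a_c = (d−2)/2, and let a, b, p satisfy the Caffarelli–Kohn–Nirenberg admissibility conditions (b = a − a_c + d/p; p ∈ [2, 2d/(d−2)] if d ≥ 3, p ∈ [2,∞) if d = 1,2; a < a_c; a ≤ b ≤ a+1 if d ≥ 3, a < b ≤ a+1 if d = 2, a + 1/2 < b ≤ a+1 if d = 1), let C_{a,b} be the smallest constant in the inequality ( ∫ |u|^p |x|^{−bp} dx )^{2/p} ≤ C_{a,b} ∫ |∇u|² |x|^{−2a} dx, and let q = p/(p−1). Then for every smooth function u with compact support in ℝ^d \ {0}, setting v = −Δu + 2a (x/|x|²)·∇u, one has (1/C_{a,b}) ∫_{ℝ^d} |∇u|² |x|^{−2a} dx ≤ ( ∫_{ℝ^d} |v|^q |x|^{−(2a−b)q} dx )^{2/q}. -/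
open MeasureTheory Real
open scoped RealInnerProductSpace

noncomputable section

namespace CKNAux

variable {d : ℕ}

local notation "E" => EuclideanSpace ℝ (Fin d)

lemma cont_of {K : Set E} (hK : IsCompact K) (h0 : (0 : E) ∉ K) {f : E → ℝ}
    (hf : ∀ x ∉ K, f x = 0) (hc : ∀ x, x ≠ 0 → ContinuousAt f x) :
    Continuous f ∧ HasCompactSupport f := by
  refine ⟨continuous_iff_continuousAt.2 fun x => ?_, HasCompactSupport.intro hK hf⟩
  by_cases hx : x = 0
  · subst hx
    have : f =ᶠ[nhds (0 : E)] fun _ => 0 := by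
      filter_upwards [hK.isClosed.isOpen_compl.mem_nhds h0] with y hy using hf y hy
    exact (continuousAt_const).congr this.symm
  · exact hc x hx

lemma integrable_of {K : Set E} (hK : IsCompact K) (h0 : (0 : E) ∉ K) {f : E → ℝ}
    (hf : ∀ x ∉ K, f x = 0) (hc : ∀ x, x ≠ 0 → ContinuousAt f x) : Integrable f :=
  (cont_of hK h0 hf hc).1.integrable_of_hasCompactSupport (cont_of hK h0 hf hc).2

lemma contW (s : ℝ) (x : E) (hx : x ≠ 0) : ContinuousAt (fun y : E => ‖y‖ ^ s) x :=
  continuous_norm.continuousAt.rpow_const (Or.inl (norm_ne_zero_iff.2 hx))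

lemma hasFDerivW (a : ℝ) (x : E) (hx : x ≠ 0) :
    HasFDerivAt (fun y : E => ‖y‖ ^ (-(2 * a)))
      ((-(2 * a) * ‖x‖ ^ (-(2 * a)) / ‖x‖ ^ 2) • innerSL ℝ x) x := by
  have h1 := (hasStrictFDerivAt_norm_sq x).hasFDerivAt.rpow_const (p := -a)
    (Or.inl (pow_ne_zero 2 (norm_ne_zero_iff.2 hx)))
  have hpow : ∀ y : E, ∀ s : ℝ, (‖y‖ ^ 2) ^ s = ‖y‖ ^ (2 * s) := fun y s => by
    rw [← Real.rpow_natCast, ← Real.rpow_mul (norm_nonneg y)]; norm_num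
  have hpos : 0 < ‖x‖ := norm_pos_iff.2 hx
  have hfun : (fun y : E => ‖y‖ ^ (-(2 * a))) = fun y : E => (‖y‖ ^ 2) ^ (-a) := by
    funext y; rw [hpow]; ring_nf
  rw [hfun]
  refine h1.congr_fderiv ?_
  rw [Real.rpow_sub_one (by positivity), hpow]
  ext y
  simp
  ring_nf

lemma inner_grad (u : E → ℝ) (x y : E) : ⟪y, gradient u x⟫ = fderiv ℝ u x y := by
  rw [real_inner_comm, ← toDual_gradient]; rfl

lemma grad_apply (u : E → ℝ) (x : E) (i : Fin d) :
    gradient u x i = fderiv ℝ u x (EuclideanSpace.single i 1) := by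
  rw [← inner_grad, EuclideanSpace.inner_single_left]; simp

lemma ibp (a : ℝ) (u : E → ℝ) (hu : TestAwayFromZero d u) :
    Continuous (fun x => fderiv ℝ u x) ∧ Continuous (fun x => fderiv ℝ (fderiv ℝ u) x) := by
  have h2 : ContDiff ℝ 2 u := contDiff_infty.1 hu.1 2
  have h1 : ContDiff ℝ 1 (fderiv ℝ u) := h2.fderiv_right (by norm_num)
  exact ⟨h1.continuous, h1.continuous_fderiv (by norm_num)⟩

lemma contGrad (u : E → ℝ) (hu : TestAwayFromZero d u) : Continuous (gradient u) := by
  have := (ibp 0 u hu).1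
  exact (InnerProductSpace.toDual ℝ E).symm.continuous.comp this

lemma opLa_zero (a : ℝ) (u : E → ℝ) (x : E) (hx : x ∉ tsupport u) : opLa d a u x = 0 := by
  have h1 : fderiv ℝ u x = 0 := by
    by_contra h; exact hx (support_fderiv_subset ℝ h)
  have h2 : iteratedFDeriv ℝ 2 u x = 0 := by
    by_contra h; exact hx (support_iteratedFDeriv_subset 2 h)
  simp [opLa, lap, h1, h2]

lemma opLa_cont (a : ℝ) (u : E → ℝ) (hu : TestAwayFromZero d u) (x : E) (hx : x ≠ 0) :
    ContinuousAt (opLa d a u) x := by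
  have h1 := contGrad u hu
  have h2 : Continuous (lap d u) := by
    unfold lap
    simp only [iteratedFDeriv_two_apply]
    refine continuous_finsetSum _ fun i _ => ?_
    exact ((ibp 0 u hu).2.clm_apply continuous_const).clm_apply continuous_const
  unfold opLa
  refine h2.neg.continuousAt.add (ContinuousAt.div ?_ ?_ (by simpa using hx))
  · fun_prop
  · fun_prop

lemma parts (a : ℝ) (u : E → ℝ) (hu : TestAwayFromZero d u) (i : Fin d) :
    Integrable (fun x => u x * ((fderiv ℝ u x (EuclideanSpace.single i 1) *
        (-(2 * a) * ‖x‖ ^ (-(2 * a)) / ‖x‖ ^ 2 * x i)) + ‖x‖ ^ (-(2 * a)) *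
        fderiv ℝ (fderiv ℝ u) x (EuclideanSpace.single i 1) (EuclideanSpace.single i 1))) ∧
    Integrable (fun x => fderiv ℝ u x (EuclideanSpace.single i 1) *
      (fderiv ℝ u x (EuclideanSpace.single i 1) * ‖x‖ ^ (-(2 * a)))) ∧
    ∫ x, u x * ((fderiv ℝ u x (EuclideanSpace.single i 1) *
        (-(2 * a) * ‖x‖ ^ (-(2 * a)) / ‖x‖ ^ 2 * x i)) + ‖x‖ ^ (-(2 * a)) *
        fderiv ℝ (fderiv ℝ u) x (EuclideanSpace.single i 1) (EuclideanSpace.single i 1))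
      = - ∫ x, fderiv ℝ u x (EuclideanSpace.single i 1) *
      (fderiv ℝ u x (EuclideanSpace.single i 1) * ‖x‖ ^ (-(2 * a))) := by
  obtain ⟨c1, c2⟩ := ibp a u hu
  have h2 : ContDiff ℝ 2 u := contDiff_infty.1 hu.1 2
  have h1 : ContDiff ℝ 1 (fderiv ℝ u) := h2.fderiv_right (by norm_num)
  have cu : Continuous u := h2.continuous
  have zu : ∀ x ∉ tsupport u, u x = 0 := fun x hx => image_eq_zero_of_notMem_tsupport hx
  have zd : ∀ x ∉ tsupport u, fderiv ℝ u x = 0 := fun x hx => by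
    by_contra h; exact hx (support_fderiv_subset ℝ h)
  set e : E := EuclideanSpace.single i 1 with he
  have cd : Continuous fun x => fderiv ℝ u x e := c1.clm_apply continuous_const
  have cdd : Continuous fun x => fderiv ℝ (fderiv ℝ u) x e e :=
    (c2.clm_apply continuous_const).clm_apply continuous_const
  have ci : Continuous fun x : E => x i := by fun_prop
  have I1 : Integrable (fun x => u x * ((fderiv ℝ u x e *
        (-(2 * a) * ‖x‖ ^ (-(2 * a)) / ‖x‖ ^ 2 * x i)) + ‖x‖ ^ (-(2 * a)) *
        fderiv ℝ (fderiv ℝ u) x e e)) := by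
    refine integrable_of hu.2.1 hu.2.2 (fun x hx => by simp [zu x hx]) fun x hx => ?_
    have hw := contW (-(2 * a)) x hx
    refine cu.continuousAt.mul ((cd.continuousAt.mul (((continuousAt_const.mul hw).div ?_ ?_).mul
      ci.continuousAt)).add (hw.mul cdd.continuousAt))
    · fun_prop
    · simpa using hx
  have I2 : Integrable (fun x => fderiv ℝ u x e * (fderiv ℝ u x e * ‖x‖ ^ (-(2 * a)))) := by
    refine integrable_of hu.2.1 hu.2.2 (fun x hx => by simp [zd x hx]) fun x hx => ?_
    exact cd.continuousAt.mul (cd.continuousAt.mul (contW (-(2 * a)) x hx))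
  have I3 : Integrable (fun x => u x * (fderiv ℝ u x e * ‖x‖ ^ (-(2 * a)))) := by
    refine integrable_of hu.2.1 hu.2.2 (fun x hx => by simp [zu x hx]) fun x hx => ?_
    exact cu.continuousAt.mul (cd.continuousAt.mul (contW (-(2 * a)) x hx))
  refine ⟨I1, I2, ?_⟩
  have key := integral_bilinear_hasFDerivAt_right_eq_neg_left_of_integrable
    (μ := (volume : Measure E)) (B := ContinuousLinearMap.mul ℝ ℝ) (v := e)
    (f := u) (f' := fderiv ℝ u) (g := fun x => fderiv ℝ u x e * ‖x‖ ^ (-(2 * a)))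
    (g' := fun x => fderiv ℝ u x e • ((-(2 * a) * ‖x‖ ^ (-(2 * a)) / ‖x‖ ^ 2) • innerSL ℝ x)
      + ‖x‖ ^ (-(2 * a)) • (fderiv ℝ (fderiv ℝ u) x).flip e)
    (by simpa using I2) (by simpa [he, EuclideanSpace.inner_single_right] using I1) (by simpa using I3)
    (fun x _ => (h2.differentiable (by norm_num) x).hasFDerivAt)
    (fun x hx => by
      have hx0 : x ≠ 0 := fun h => hu.2.2 (h ▸ hx)
      have hd := (h1.differentiable (by norm_num) x).hasFDerivAt.clm_apply (hasFDerivAt_const e x)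
      refine (hd.mul (hasFDerivW a x hx0)).congr_fderiv ?_
      simp)
  simpa [he, EuclideanSpace.inner_single_right] using key

lemma green (a : ℝ) (u : E → ℝ) (hu : TestAwayFromZero d u) :
    ∫ x, ‖gradient u x‖ ^ 2 * ‖x‖ ^ (-(2 * a)) = ∫ x, u x * opLa d a u x * ‖x‖ ^ (-(2 * a)) := by
  have hL : ∀ x, ‖gradient u x‖ ^ 2 * ‖x‖ ^ (-(2 * a)) =
      ∑ i : Fin d, fderiv ℝ u x (EuclideanSpace.single i 1) *
      (fderiv ℝ u x (EuclideanSpace.single i 1) * ‖x‖ ^ (-(2 * a))) := fun x => by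
    rw [EuclideanSpace.real_norm_sq_eq, Finset.sum_mul]
    refine Finset.sum_congr rfl fun i _ => ?_
    rw [grad_apply]; ring
  have hR : ∀ x, u x * opLa d a u x * ‖x‖ ^ (-(2 * a)) =
      ∑ i : Fin d, -(u x * ((fderiv ℝ u x (EuclideanSpace.single i 1) *
        (-(2 * a) * ‖x‖ ^ (-(2 * a)) / ‖x‖ ^ 2 * x i)) + ‖x‖ ^ (-(2 * a)) *
        fderiv ℝ (fderiv ℝ u) x (EuclideanSpace.single i 1) (EuclideanSpace.single i 1))) :=
      fun x => by
    have hin : ⟪x, gradient u x⟫ = ∑ i : Fin d, fderiv ℝ u x (EuclideanSpace.single i 1) * x i := by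
      rw [PiLp.inner_apply]
      refine Finset.sum_congr rfl fun i _ => ?_
      rw [grad_apply]; simp
    unfold opLa lap
    rw [hin]
    simp only [iteratedFDeriv_two_apply, Matrix.cons_val_zero, Matrix.cons_val_one]
    rw [Finset.mul_sum, Finset.sum_div, ← Finset.sum_neg_distrib, ← Finset.sum_add_distrib,
      Finset.mul_sum, Finset.sum_mul]
    refine Finset.sum_congr rfl fun i _ => ?_
    ring
  simp_rw [hL, hR]
  rw [integral_finsetSum _ fun i _ => (parts a u hu i).2.1,
    integral_finsetSum _ fun i _ => (parts a u hu i).1.fun_neg]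
  refine Finset.sum_congr rfl fun i _ => ?_
  rw [integral_neg, (parts a u hu i).2.2, neg_neg]

lemma holder (a b p : ℝ) (hp : 2 ≤ p) (u : E → ℝ) (hu : TestAwayFromZero d u) :
    ∫ x, u x * opLa d a u x * ‖x‖ ^ (-(2 * a)) ≤
      (∫ x, |u x| ^ p * ‖x‖ ^ (-(b * p))) ^ (1 / p) *
      (∫ x, |opLa d a u x| ^ (p / (p - 1)) *
            ‖x‖ ^ (-((2 * a - b) * (p / (p - 1))))) ^ (1 / (p / (p - 1))) := by
  have hpq : p.HolderConjugate (p / (p - 1)) :=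
    (Real.holderConjugate_iff_eq_conjExponent (by linarith)).2 rfl
  set q := p / (p - 1) with hq
  have cu : Continuous u := hu.1.continuous
  have zu : ∀ x ∉ tsupport u, u x = 0 := fun x hx => image_eq_zero_of_notMem_tsupport hx
  have hf := cont_of (f := fun x => |u x| * ‖x‖ ^ (-b)) hu.2.1 hu.2.2
    (fun x hx => by simp [zu x hx])
    (fun x hx => cu.abs.continuousAt.mul (contW _ x hx))
  have hg := cont_of (f := fun x => |opLa d a u x| * ‖x‖ ^ (-(2 * a - b))) hu.2.1 hu.2.2
    (fun x hx => by simp [opLa_zero a u x hx])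
    (fun x hx => (opLa_cont a u hu x hx).abs.mul (contW _ x hx))
  have H := integral_mul_le_Lp_mul_Lq_of_nonneg (μ := (volume : Measure E)) hpq
    (Filter.Eventually.of_forall fun x => by positivity)
    (Filter.Eventually.of_forall fun x => by positivity)
    (hf.1.memLp_of_hasCompactSupport hf.2) (hg.1.memLp_of_hasCompactSupport hg.2)
  have pw : ∀ (c s r : ℝ) (x : E), (|c| * ‖x‖ ^ (-s)) ^ r = |c| ^ r * ‖x‖ ^ (-(s * r)) := by
    intro c s r x
    rw [Real.mul_rpow (abs_nonneg _) (by positivity), ← Real.rpow_mul (norm_nonneg x)]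
    ring_nf
  simp only [pw] at H
  refine le_trans ?_ H
  refine integral_mono ?_ ?_ ?_
  · exact integrable_of hu.2.1 hu.2.2 (fun x hx => by simp [zu x hx])
      fun x hx => (cu.continuousAt.mul (opLa_cont a u hu x hx)).mul (contW _ x hx)
  · exact (hf.1.mul hg.1).integrable_of_hasCompactSupport hf.2.mul_right
  · intro x
    by_cases hx : x = 0
    · have : u x = 0 := zu x (hx ▸ hu.2.2)
      simp [this]
    · have hx' : 0 < ‖x‖ := norm_pos_iff.2 hx
      have e1 : ‖x‖ ^ (-(2 * a)) = ‖x‖ ^ (-b) * ‖x‖ ^ (-(2 * a - b)) := by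
        rw [← Real.rpow_add hx']; ring_nf
      calc u x * opLa d a u x * ‖x‖ ^ (-(2 * a))
          ≤ |u x * opLa d a u x| * ‖x‖ ^ (-(2 * a)) := by
            gcongr; exact le_abs_self _
        _ = _ := by
            rw [abs_mul, e1]; ring

end CKNAux

/-- the dual (Hardy-Littlewood-Sobolev type) form of the
Caffarelli-Kohn-Nirenberg inequality, with `v = L_a u` and `q = p/(p−1)`. -/
theorem ckn_dual (d : ℕ) (hd : 1 ≤ d) (a b p : ℝ) (hadm : CKNAdmissible d a b p)
    (Cab : ℝ)
    (hCab : IsLeast {C : ℝ | ∀ u : EuclideanSpace ℝ (Fin d) → ℝ, TestAwayFromZero d u →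
      (∫ x, |u x| ^ p * ‖x‖ ^ (-(b * p))) ^ ((2 : ℝ) / p) ≤
        C * ∫ x, ‖gradient u x‖ ^ 2 * ‖x‖ ^ (-(2 * a))} Cab) :
    ∀ u : EuclideanSpace ℝ (Fin d) → ℝ, TestAwayFromZero d u →
      1 / Cab * (∫ x, ‖gradient u x‖ ^ 2 * ‖x‖ ^ (-(2 * a))) ≤
        (∫ x, |opLa d a u x| ^ (p / (p - 1)) *
            ‖x‖ ^ (-((2 * a - b) * (p / (p - 1))))) ^ ((2 : ℝ) / (p / (p - 1))) := by
  intro u hu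
  have hp : 2 ≤ p := hadm.2.1
  have hC := hCab.1 u hu
  have hG : ∫ x, ‖gradient u x‖ ^ 2 * ‖x‖ ^ (-(2 * a)) ≤ _ :=
    (CKNAux.green a u hu).trans_le (CKNAux.holder a b p hp u hu)
  have hG0 : 0 ≤ ∫ x, ‖gradient u x‖ ^ 2 * ‖x‖ ^ (-(2 * a)) :=
    integral_nonneg fun x => by positivity
  have hP0 : 0 ≤ ∫ x, |u x| ^ p * ‖x‖ ^ (-(b * p)) :=
    integral_nonneg fun x => by positivity
  have hV0 : 0 ≤ ∫ x, |opLa d a u x| ^ (p / (p - 1)) *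
            ‖x‖ ^ (-((2 * a - b) * (p / (p - 1)))) :=
    integral_nonneg fun x => by positivity
  generalize (∫ x, ‖gradient u x‖ ^ 2 * ‖x‖ ^ (-(2 * a))) = G at *
  generalize (∫ x, |u x| ^ p * ‖x‖ ^ (-(b * p))) = P at *
  generalize (∫ x, |opLa d a u x| ^ (p / (p - 1)) *
            ‖x‖ ^ (-((2 * a - b) * (p / (p - 1))))) = V at *
  have sq : ∀ (t s : ℝ), 0 ≤ t → t ^ ((2 : ℝ) / s) = (t ^ (1 / s)) ^ 2 := fun t s ht => by
    rw [← Real.rpow_natCast, ← Real.rpow_mul ht]; congr 1; push_cast; ring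
  rw [sq P p hP0] at hC
  rw [sq V _ hV0]
  have hA : 0 ≤ P ^ (1 / p) := by positivity
  have hB : 0 ≤ V ^ (1 / (p / (p - 1))) := by positivity
  generalize P ^ (1 / p) = A at *
  generalize V ^ (1 / (p / (p - 1))) = B at *
  rcases le_or_gt Cab 0 with h | h
  · have : 1 / Cab ≤ 0 := one_div_nonpos.2 h
    nlinarith [mul_nonneg (neg_nonneg.2 this) hG0, sq_nonneg B]
  · rw [one_div, inv_mul_le_iff₀ h]
    rcases hG0.eq_or_lt with h0 | h0
    · rw [← h0]; positivity
    · have h1 : G * G ≤ G * (Cab * B ^ 2) := by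
        calc G * G ≤ (A * B) * (A * B) := by gcongr
          _ = A ^ 2 * B ^ 2 := by ring
          _ ≤ (Cab * G) * B ^ 2 := by gcongr
          _ = _ := by ring
      exact le_of_mul_le_mul_left h1 h0
end
end
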